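/- arXiv:2306.00654 — 3 statements merged into one kernel-verified Lean document; each statement's English description precedes it below -/
import Mathlib

section
/- Let 1 ≤ k ≤ d. A linear map L : M_d(ℂ) → M_d(ℂ) is k-positive if and only if for every orthonormal subset {v_1, …, v_k} of ℂ^d, the bipartite matrix C_k^v(L) := Σ_{i,j=1}^k |i⟩⟨j| ⊗ L(|v_i⟩⟨v_j|) ∈ M_k(ℂ) ⊗ M_d(ℂ) is positive semidefinite. -/
/-!
A positive semidefinite matrix on `ℂ^k ⊗ ℂ^m` is a sum of rank-one operators `|ξ⟩⟨ξ|`, and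
`id ⊗ L` sends `|ξ⟩⟨ξ|` with `ξ = ∑ i, |i⟩ ⊗ w i` to `∑ i j, |i⟩⟨j| ⊗ L(|w i⟩⟨w j|)`. Hence
`k`-positivity only has to be tested on these block matrices, for arbitrary families `w` of `k`
vectors. When `k ≤ m`, such a family lies in the span of an orthonormal family `v` of the same
size. If `w i = ∑ j, c i j • v j`, then the block matrix of `w` is `(c ⊗ 1) C (c ⊗ 1)ᴴ`, where `C`
is that of `v`.
-/

open Matrix
open scoped ComplexOrder

noncomputable section

/-- The ampliation `id_{M_k} ⊗ L` of a map `L` applied to a bipartite matrix, blockwise. -/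
def idTensor {k m n : ℕ} (L : Matrix (Fin m) (Fin m) ℂ →ₗ[ℂ] Matrix (Fin n) (Fin n) ℂ)
    (X : Matrix (Fin k × Fin m) (Fin k × Fin m) ℂ) : Matrix (Fin k × Fin n) (Fin k × Fin n) ℂ :=
  Matrix.of fun p q => L (Matrix.of fun a b => X (p.1, a) (q.1, b)) p.2 q.2

/-- `L` is `k`-positive if `id_{M_k} ⊗ L` sends positive semidefinite matrices to positive
semidefinite matrices. -/
def IsKPositive {m n : ℕ} (k : ℕ)
    (L : Matrix (Fin m) (Fin m) ℂ →ₗ[ℂ] Matrix (Fin n) (Fin n) ℂ) : Prop :=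
  ∀ X : Matrix (Fin k × Fin m) (Fin k × Fin m) ℂ, X.PosSemidef → (idTensor L X).PosSemidef

/-- The linear map `L^{(d)}_{p,q}(Z) = (1-p-q) (Tr Z / d) I_d + p Z + q Zᵀ`. -/
def Lmap (d : ℕ) (p q : ℝ) :
    Matrix (Fin d) (Fin d) ℂ →ₗ[ℂ] Matrix (Fin d) (Fin d) ℂ :=
  ((((1 - p - q : ℝ) : ℂ) / (d : ℂ)) •
      (Matrix.traceLinearMap (Fin d) ℂ ℂ).smulRight (1 : Matrix (Fin d) (Fin d) ℂ))
    + ((p : ℝ) : ℂ) • LinearMap.id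
    + ((q : ℝ) : ℂ) • (Matrix.transposeLinearEquiv (Fin d) (Fin d) ℂ ℂ).toLinearMap

/-- The maximally entangled vector `|Ω_d⟩ = (1/√d) ∑_j |jj⟩`. -/
def omegaVec (d : ℕ) : Fin d × Fin d → ℂ :=
  fun p => if p.1 = p.2 then ((1 / Real.sqrt d : ℝ) : ℂ) else 0

/-- The flip operator `F_d = ∑_{i,j} |ij⟩⟨ji|`. -/
def flipMatrix (d : ℕ) : Matrix (Fin d × Fin d) (Fin d × Fin d) ℂ :=
  Matrix.of fun p q => if p.1 = q.2 ∧ p.2 = q.1 then 1 else 0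

/-- The orthogonally invariant operators
`ρ^{(d)}_{a,b} = ((1-a-b)/d²) I + a |Ω_d⟩⟨Ω_d| + (b/d) F_d`. -/
def rho (d : ℕ) (a b : ℝ) : Matrix (Fin d × Fin d) (Fin d × Fin d) ℂ :=
  ((((1 - a - b : ℝ) : ℂ) / ((d : ℂ) ^ 2)) • (1 : Matrix (Fin d × Fin d) (Fin d × Fin d) ℂ))
    + (((a : ℝ) : ℂ) • Matrix.vecMulVec (omegaVec d) (star (omegaVec d)))
    + ((((b : ℝ) : ℂ) / (d : ℂ)) • flipMatrix d)

/-- `Sch_k`: finite sums of rank-one operators `|ξ⟩⟨ξ|` with Schmidt rank `SR(ξ) ≤ k`,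
where `SR(ξ)` is the rank of the `d_A × d_B` coefficient matrix of `ξ ∈ ℂ^{d_A} ⊗ ℂ^{d_B}`. -/
def SchmidtSet (dA dB k : ℕ) : Set (Matrix (Fin dA × Fin dB) (Fin dA × Fin dB) ℂ) :=
  {X | ∃ (N : ℕ) (ξ : Fin N → (Fin dA × Fin dB → ℂ)),
    (∀ i, (Matrix.of fun a b => ξ i (a, b)).rank ≤ k) ∧
    X = ∑ i, Matrix.vecMulVec (ξ i) (star (ξ i))}

/-- The bipartite matrix `C^w(L) = ∑_{i,j} |i⟩⟨j| ⊗ L(|w_i⟩⟨w_j|)` of a family of vectors `w`, whose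
positivity tests the positivity of ampliations of `L`. The family need not be orthonormal. -/
def choiMatrix {ι m n R : Type*} [CommSemiring R] [StarRing R]
    (L : Matrix m m R →ₗ[R] Matrix n n R) (w : ι → m → R) : Matrix (ι × n) (ι × n) R :=
  Matrix.of fun p q => L (vecMulVec (w p.1) (star (w q.1))) p.2 q.2

section Orthonormal

theorem exists_orthonormal_le_span_range {𝕜 E ι : Type*} [RCLike 𝕜] [NormedAddCommGroup E]
    [InnerProductSpace 𝕜 E] [FiniteDimensional 𝕜 E] [Fintype ι] {W : Submodule 𝕜 E}
    (hW : Module.finrank 𝕜 W ≤ Fintype.card ι) (hE : Fintype.card ι ≤ Module.finrank 𝕜 E) :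
    ∃ v : ι → E, Orthonormal 𝕜 v ∧ W ≤ Submodule.span 𝕜 (Set.range v) := by
  classical
  let b := stdOrthonormalBasis 𝕜 W
  have hb : Orthonormal 𝕜 fun i => (b i : E) := b.orthonormal.comp_linearIsometry W.subtypeₗᵢ
  obtain ⟨u, B, hbu, hB⟩ := hb.toSubtypeRange.exists_orthonormalBasis_extension
  let s : Finset E := Finset.univ.image fun i => (b i : E)
  have hsu : s ⊆ u := by simpa [s, ← Finset.coe_subset] using hbu
  have card_s : s.card ≤ Fintype.card ι := (Finset.card_image_le.trans_eq (by simp)).trans hW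
  have card_u : Fintype.card ι ≤ u.card := by
    simpa [Module.finrank_eq_card_basis B.toBasis] using hE
  obtain ⟨t, hst, htu, card_t⟩ := Finset.exists_subsuperset_card_eq hsu card_s card_u
  let e : ι ≃ t := Fintype.equivOfCardEq (by simp [card_t])
  have hu : Orthonormal 𝕜 ((↑) : u → E) := hB ▸ B.orthonormal
  refine ⟨fun i => e i, hu.comp (Set.inclusion htu ∘ e)
    ((Set.inclusion_injective htu).comp e.injective), ?_⟩
  calc W = Submodule.span 𝕜 (s : Set E) := by
        simpa [s, Submodule.map_span, ← Set.range_comp, Function.comp_def] using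
          (congrArg (Submodule.map W.subtype) b.toBasis.span_eq).symm
    _ ≤ Submodule.span 𝕜 (Set.range fun i => (e i : E)) := by
        refine Submodule.span_mono fun x hx => ?_
        exact ⟨e.symm ⟨x, hst hx⟩, by simp⟩

theorem orthonormal_toLp_iff {𝕜 ι n : Type*} [RCLike 𝕜] [Fintype n] [DecidableEq ι]
    {v : ι → n → 𝕜} :
    Orthonormal 𝕜 (fun i => WithLp.toLp 2 (v i)) ↔
      ∀ i j, star (v i) ⬝ᵥ v j = if i = j then 1 else 0 := by
  simp_rw [orthonormal_iff_ite, EuclideanSpace.inner_toLp_toLp, dotProduct_comm]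

theorem exists_star_dotProduct_eq_ite_and_mem_span {𝕜 ι n : Type*} [RCLike 𝕜] [Fintype ι]
    [DecidableEq ι] [Fintype n] (h : Fintype.card ι ≤ Fintype.card n) (w : ι → n → 𝕜) :
    ∃ v : ι → n → 𝕜, (∀ i j, star (v i) ⬝ᵥ v j = if i = j then 1 else 0) ∧
      ∀ i, w i ∈ Submodule.span 𝕜 (Set.range v) := by
  obtain ⟨v, hv, hwv⟩ := exists_orthonormal_le_span_range
    (finrank_range_le_card (R := 𝕜) fun i => WithLp.toLp 2 (w i)) (by simpa using h)
  refine ⟨fun i => (v i).ofLp, orthonormal_toLp_iff.1 hv, fun i => ?_⟩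
  have hi := hwv (Submodule.subset_span (Set.mem_range_self i))
  rw [Submodule.mem_span_range_iff_exists_fun] at hi ⊢
  obtain ⟨c, hc⟩ := hi
  exact ⟨c, by simpa using congrArg WithLp.ofLp hc⟩

end Orthonormal

section ChoiMatrix

variable {ι κ m n R : Type*}

theorem vecMulVec_sum_smul_star_sum_smul [CommSemiring R] [StarRing R] [Fintype ι] [Fintype κ]
    (a : ι → R) (b : κ → R) (v : ι → m → R) (w : κ → n → R) :
    vecMulVec (∑ i, a i • v i) (star (∑ j, b j • w j)) =
      ∑ i, ∑ j, (a i * star (b j)) • vecMulVec (v i) (star (w j)) := by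
  ext x y
  simp only [vecMulVec_apply, Finset.sum_apply, Pi.star_apply, Pi.smul_apply, smul_eq_mul,
    star_sum, star_mul', Finset.sum_mul_sum, Matrix.sum_apply, Matrix.smul_apply, mul_mul_mul_comm]

open scoped Kronecker in
theorem choiMatrix_sum_smul [CommSemiring R] [StarRing R] [Fintype κ] [Fintype n] [DecidableEq n]
    (L : Matrix m m R →ₗ[R] Matrix n n R) (c : Matrix ι κ R) (v : κ → m → R) :
    choiMatrix L (fun i => ∑ j, c i j • v j) =
      (c ⊗ₖ (1 : Matrix n n R)) * choiMatrix L v * (c ⊗ₖ (1 : Matrix n n R))ᴴ := by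
  ext ⟨i, x⟩ ⟨i', y⟩
  calc
    _ = ∑ j, ∑ j', c i j * star (c i' j') * choiMatrix L v (j, x) (j', y) := by
      simp only [choiMatrix, of_apply, vecMulVec_sum_smul_star_sum_smul, map_sum, map_smul,
        Matrix.sum_apply, Matrix.smul_apply, smul_eq_mul]
    _ = _ := by
      rw [Finset.sum_comm]
      simp [mul_apply, Fintype.sum_prod_type, one_apply, Finset.sum_mul, mul_right_comm,
        apply_ite (star : R → R)]

theorem posSemidef_choiMatrix_of_mem_span [CommRing R] [PartialOrder R] [StarRing R]
    [Finite ι] [Finite κ] [Finite n] {L : Matrix m m R →ₗ[R] Matrix n n R}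
    {v : κ → m → R} {w : ι → m → R} (hv : (choiMatrix L v).PosSemidef)
    (hw : ∀ i, w i ∈ Submodule.span R (Set.range v)) : (choiMatrix L w).PosSemidef := by
  classical
  have := Fintype.ofFinite κ
  have := Fintype.ofFinite n
  simp only [Submodule.mem_span_range_iff_exists_fun] at hw
  choose c hc using hw
  obtain rfl : (fun i => ∑ j, c i j • v j) = w := funext hc
  rw [choiMatrix_sum_smul L c v]
  exact hv.mul_mul_conjTranspose_same _

end ChoiMatrix

section IsKPositive

variable {k m n : ℕ} (L : Matrix (Fin m) (Fin m) ℂ →ₗ[ℂ] Matrix (Fin n) (Fin n) ℂ)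

theorem idTensor_sum {α : Type*} (s : Finset α)
    (X : α → Matrix (Fin k × Fin m) (Fin k × Fin m) ℂ) :
    idTensor L (∑ r ∈ s, X r) = ∑ r ∈ s, idTensor L (X r) := by
  ext p q
  have sum_block : (of fun a b => (∑ r ∈ s, X r) (p.1, a) (q.1, b)) =
      ∑ r ∈ s, of fun a b => X r (p.1, a) (q.1, b) := by
    ext
    simp [Matrix.sum_apply]
  rw [Matrix.sum_apply]
  simp only [idTensor, of_apply, sum_block, map_sum]
  rw [Matrix.sum_apply]

theorem idTensor_vecMulVec_star_self (ξ : Fin k × Fin m → ℂ) :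
    idTensor L (vecMulVec ξ (star ξ)) = choiMatrix L (Function.curry ξ) :=
  rfl

theorem isKPositive_iff_forall_posSemidef_choiMatrix :
    IsKPositive k L ↔ ∀ w : Fin k → Fin m → ℂ, (choiMatrix L w).PosSemidef := by
  constructor
  · intro hL w
    have h := hL _ (posSemidef_vecMulVec_self_star (Function.uncurry w))
    rwa [idTensor_vecMulVec_star_self, Function.curry_uncurry] at h
  · intro hL X hX
    obtain ⟨N, ξ, rfl⟩ := posSemidef_iff_eq_sum_vecMulVec.1 hX
    simp only [idTensor_sum, idTensor_vecMulVec_star_self]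
    exact posSemidef_sum _ fun r _ => hL (Function.curry (ξ r))

theorem isKPositive_iff_orthonormal_choi_general (hkm : k ≤ m) :
    IsKPositive k L ↔
      ∀ v : Fin k → Fin m → ℂ,
        (∀ i j, star (v i) ⬝ᵥ v j = if i = j then 1 else 0) → (choiMatrix L v).PosSemidef := by
  rw [isKPositive_iff_forall_posSemidef_choiMatrix]
  refine ⟨fun hL v _ => hL v, fun hL w => ?_⟩
  obtain ⟨v, hv, hwv⟩ := exists_star_dotProduct_eq_ite_and_mem_span (by simpa using hkm) w
  exact posSemidef_choiMatrix_of_mem_span (hL v hv) hwv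

end IsKPositive

/-- (Tomiyama's criterion.) For `1 ≤ k ≤ d`, a linear map
`L : M_d → M_d` is `k`-positive iff for every orthonormal subset `{v_1,…,v_k} ⊆ ℂ^d` the
matrix `C_k^v(L) = ∑_{i,j} |i⟩⟨j| ⊗ L(|v_i⟩⟨v_j|)` is positive semidefinite. -/
theorem isKPositive_iff_orthonormal_choi {d k : ℕ} (hk : 1 ≤ k) (hkd : k ≤ d)
    (L : Matrix (Fin d) (Fin d) ℂ →ₗ[ℂ] Matrix (Fin d) (Fin d) ℂ) :
    IsKPositive k L ↔
      ∀ v : Fin k → (Fin d → ℂ),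
        (∀ i j, star (v i) ⬝ᵥ v j = if i = j then 1 else 0) →
        (Matrix.of fun p q : Fin k × Fin d =>
          L (Matrix.vecMulVec (v p.1) (star (v q.1))) p.2 q.2).PosSemidef := by
  exact isKPositive_iff_orthonormal_choi_general L hkd

end
end

section
/- Let d ≥ 2 and p, q ∈ ℝ. The map L^{(d)}_{p,q} is positive (i.e. 1-positive) if and only if p − (d−1)q ≤ 1, q − (d−1)p ≤ 1, and −1/(d−1) ≤ p + q ≤ 1. -/
open Matrix
open scoped ComplexOrder

noncomputable section

/-!
The condition of the theorem says that the affine function `a + p s + q t`, `a = (1 - p - q) / d`,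
is nonnegative at the four corners of the square `[0, 1]²`. It is sufficient because a positive
semidefinite `Z` satisfies both `0 ≤ Z ≤ (Tr Z) I` and `0 ≤ Zᵀ ≤ (Tr Z) I`. It is necessary because
`⟨v, L(|u⟩⟨u|) v⟩ = a + p |⟨u, v⟩|² + q |⟨star u, v⟩|²` for unit vectors `u` and `v`, and the pair
`(|⟨u, v⟩|², |⟨star u, v⟩|²)` attains every corner: two orthogonal or two equal basis vectors give
`(0, 0)` and `(1, 1)`, while an isotropic `u` with `v = u` or `v = star u` gives `(1, 0)` and
`(0, 1)`.
-/

section OrderedModule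

variable {R E : Type*} [Ring R] [LinearOrder R] [IsStrictOrderedRing R]
  [AddCommGroup E] [PartialOrder E] [IsOrderedAddMonoid E] [Module R E] [PosSMulMono R E]

lemma inf_zero_smul_le_smul (p : R) {s m : E} (hs : 0 ≤ s) (hsm : s ≤ m) :
    (p ⊓ 0) • m ≤ p • s := by
  obtain hp | hp := le_total p 0
  · simpa only [inf_eq_left.2 hp] using smul_le_smul_of_nonpos_left hsm hp
  · simpa only [inf_eq_right.2 hp, zero_smul] using smul_nonneg hp hs

lemma smul_add_smul_add_smul_nonneg_of_le {a p q : R} {m s t : E}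
    (ha : 0 ≤ a) (hap : 0 ≤ a + p) (haq : 0 ≤ a + q) (hapq : 0 ≤ a + p + q)
    (hs : 0 ≤ s) (hsm : s ≤ m) (ht : 0 ≤ t) (htm : t ≤ m) :
    0 ≤ a • m + p • s + q • t := by
  have hcoeff : 0 ≤ a + p ⊓ 0 + q ⊓ 0 := by
    obtain hp | hp := le_total p 0 <;> obtain hq | hq := le_total q 0 <;> simpa [hp, hq]
  calc 0 ≤ (a + p ⊓ 0 + q ⊓ 0) • m := smul_nonneg hcoeff (hs.trans hsm)
    _ = a • m + (p ⊓ 0) • m + (q ⊓ 0) • m := by rw [add_smul, add_smul]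
    _ ≤ a • m + p • s + q • t := by
      gcongr
      · exact inf_zero_smul_le_smul p hs hsm
      · exact inf_zero_smul_le_smul q ht htm

end OrderedModule

lemma exists_isotropic_vector (n : Type*) [Fintype n] [Nontrivial n] :
    ∃ v : n → ℂ, v ⬝ᵥ v = 0 ∧ star v ⬝ᵥ v = 2 := by
  classical
  obtain ⟨i, j, hij⟩ := exists_pair_ne n
  refine ⟨Pi.single i 1 + Pi.single j Complex.I, ?_, ?_⟩ <;>
    simp [hij, hij.symm, one_add_one_eq_two]

section OrthogonallyCovariant

open scoped MatrixOrder

variable {𝕜 n : Type*} [RCLike 𝕜] [Fintype n] [DecidableEq n]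

lemma le_trace_smul_one_of_nonneg {Z : Matrix n n 𝕜} (hZ : 0 ≤ Z) : Z ≤ Z.trace • 1 := by
  have hpsd : Z.PosSemidef := nonneg_iff_posSemidef.1 hZ
  have htrace : Z.trace • (1 : Matrix n n 𝕜) =
      algebraMap ℝ (Matrix n n 𝕜) (∑ i, hpsd.isHermitian.eigenvalues i) := by
    rw [hpsd.isHermitian.trace_eq_sum_eigenvalues, ← RCLike.ofReal_sum,
      Algebra.algebraMap_eq_smul_one, RCLike.real_smul_eq_coe_smul (K := 𝕜)]
  rw [htrace, le_algebraMap_iff_spectrum_le (ha := hpsd.isHermitian),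
    hpsd.isHermitian.spectrum_real_eq_range_eigenvalues]
  rintro _ ⟨i, rfl⟩
  exact Finset.single_le_sum (fun j _ ↦ hpsd.eigenvalues_nonneg j) (Finset.mem_univ i)

/-- The map `Z ↦ a (Tr Z) I + p Z + q Zᵀ`. These are the Hermitian-preserving linear maps that
commute with conjugation by real orthogonal matrices; `Lmap d p q` is the case
`a = (1 - p - q) / d`, which makes the map unital. -/
def orthogonallyCovariantMap (a p q : ℝ) (Z : Matrix n n 𝕜) : Matrix n n 𝕜 :=
  a • Z.trace • 1 + p • Z + q • Zᵀ

lemma orthogonallyCovariantMap_nonneg {a p q : ℝ}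
    (ha : 0 ≤ a) (hap : 0 ≤ a + p) (haq : 0 ≤ a + q) (hapq : 0 ≤ a + p + q)
    {Z : Matrix n n 𝕜} (hZ : 0 ≤ Z) : 0 ≤ orthogonallyCovariantMap a p q Z := by
  have hZt : 0 ≤ Zᵀ := (nonneg_iff_posSemidef.1 hZ).transpose.nonneg
  have hZt_le : Zᵀ ≤ Z.trace • 1 := by
    simpa only [trace_transpose] using le_trace_smul_one_of_nonneg hZt
  exact smul_add_smul_add_smul_nonneg_of_le ha hap haq hapq
    hZ (le_trace_smul_one_of_nonneg hZ) hZt hZt_le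

lemma star_dotProduct_orthogonallyCovariantMap_vecMulVec (a p q : ℝ) (x y : n → 𝕜) :
    star y ⬝ᵥ (orthogonallyCovariantMap a p q (vecMulVec x (star x)) *ᵥ y) =
      a • ((x ⬝ᵥ star x) * (star y ⬝ᵥ y)) + p • ((star y ⬝ᵥ x) * (star x ⬝ᵥ y)) +
        q • ((star y ⬝ᵥ star x) * (x ⬝ᵥ y)) := by
  simp [orthogonallyCovariantMap, add_mulVec, smul_mulVec, vecMulVec_mulVec, mul_comm]

lemma coeff_nonneg_of_orthogonallyCovariantMap_nonneg [Nontrivial n] {a p q : ℝ}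
    (h : ∀ Z : Matrix n n ℂ, 0 ≤ Z → 0 ≤ orthogonallyCovariantMap a p q Z) :
    0 ≤ a ∧ 0 ≤ a + p ∧ 0 ≤ a + q ∧ 0 ≤ a + p + q := by
  have hform (x y : n → ℂ) := (nonneg_iff_posSemidef.1
    (h _ (posSemidef_vecMulVec_self_star x).nonneg)).dotProduct_mulVec_nonneg y
  simp only [star_dotProduct_orthogonallyCovariantMap_vecMulVec] at hform
  obtain ⟨i, j, hij⟩ := exists_pair_ne n
  obtain ⟨v, hv, hv_norm⟩ := exists_isotropic_vector n
  have hv_star : star v ⬝ᵥ star v = 0 := by rw [star_dotProduct_star, hv, star_zero]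
  have hv_norm' : v ⬝ᵥ star v = 2 := by rw [dotProduct_comm, hv_norm]
  refine ⟨?_, ?_, ?_, ?_⟩
  · simpa [hij, hij.symm] using hform (Pi.single i 1) (Pi.single j 1)
  · have hvv : (0 : ℂ) ≤ ((4 * (a + p) : ℝ) : ℂ) := by
      convert hform v v using 1
      simp only [hv, hv_norm, hv_norm', hv_star, Complex.real_smul]
      push_cast
      ring
    linarith [Complex.zero_le_real.1 hvv]
  · have hvv : (0 : ℂ) ≤ ((4 * (a + q) : ℝ) : ℂ) := by
      convert hform v (star v) using 1
      simp only [hv, hv_norm', hv_star, star_star, Complex.real_smul]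
      push_cast
      ring
    linarith [Complex.zero_le_real.1 hvv]
  · simpa [← Complex.ofReal_add] using hform (Pi.single i 1) (Pi.single i 1)

theorem forall_orthogonallyCovariantMap_nonneg_iff [Nontrivial n] {a p q : ℝ} :
    (∀ Z : Matrix n n ℂ, 0 ≤ Z → 0 ≤ orthogonallyCovariantMap a p q Z) ↔
      0 ≤ a ∧ 0 ≤ a + p ∧ 0 ≤ a + q ∧ 0 ≤ a + p + q :=
  ⟨coeff_nonneg_of_orthogonallyCovariantMap_nonneg,
    fun ⟨ha, hap, haq, hapq⟩ _ ↦ orthogonallyCovariantMap_nonneg ha hap haq hapq⟩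

end OrthogonallyCovariant

lemma Lmap_apply (d : ℕ) (p q : ℝ) (Z : Matrix (Fin d) (Fin d) ℂ) :
    Lmap d p q Z = orthogonallyCovariantMap ((1 - p - q) / d) p q Z := by
  ext i j
  simp [Lmap, orthogonallyCovariantMap]

lemma idTensor_eq_submatrix {m n : ℕ}
    (L : Matrix (Fin m) (Fin m) ℂ →ₗ[ℂ] Matrix (Fin n) (Fin n) ℂ)
    (X : Matrix (Fin 1 × Fin m) (Fin 1 × Fin m) ℂ) :
    idTensor L X = (L (X.submatrix (Prod.mk 0) (Prod.mk 0))).submatrix Prod.snd Prod.snd := by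
  ext ⟨a, b⟩ ⟨a', b'⟩
  obtain rfl := Subsingleton.elim a 0
  obtain rfl := Subsingleton.elim a' 0
  rfl

lemma isKPositive_one_iff {m n : ℕ}
    {L : Matrix (Fin m) (Fin m) ℂ →ₗ[ℂ] Matrix (Fin n) (Fin n) ℂ} :
    IsKPositive 1 L ↔ ∀ Z : Matrix (Fin m) (Fin m) ℂ, Z.PosSemidef → (L Z).PosSemidef := by
  refine ⟨fun h Z hZ ↦ ?_, fun h X hX ↦ ?_⟩
  · have hLZ := h _ (hZ.submatrix (Prod.snd : Fin 1 × Fin m → Fin m))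
    rw [idTensor_eq_submatrix] at hLZ
    exact hLZ.submatrix (Prod.mk 0)
  · rw [idTensor_eq_submatrix]
    exact (h _ (hX.submatrix _)).submatrix _

lemma corners_nonneg_iff {K : Type*} [Field K] [LinearOrder K] [IsStrictOrderedRing K] {d p q : K}
    (hd : 1 < d) :
    (0 ≤ (1 - p - q) / d ∧ 0 ≤ (1 - p - q) / d + p ∧ 0 ≤ (1 - p - q) / d + q ∧
        0 ≤ (1 - p - q) / d + p + q) ↔
      p - (d - 1) * q ≤ 1 ∧ q - (d - 1) * p ≤ 1 ∧ -(1 / (d - 1)) ≤ p + q ∧ p + q ≤ 1 := by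
  have hd0 : 0 < d := one_pos.trans hd
  have hd1 : 0 < d - 1 := sub_pos.2 hd
  have h00 : 0 ≤ (1 - p - q) / d ↔ p + q ≤ 1 := by
    rw [le_div_iff₀ hd0, zero_mul, sub_sub, sub_nonneg]
  have h10 : 0 ≤ (1 - p - q) / d + p ↔ q - (d - 1) * p ≤ 1 := by
    rw [div_add' _ _ _ hd0.ne', le_div_iff₀ hd0]
    constructor <;> intro h <;> linarith
  have h01 : 0 ≤ (1 - p - q) / d + q ↔ p - (d - 1) * q ≤ 1 := by
    rw [div_add' _ _ _ hd0.ne', le_div_iff₀ hd0]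
    constructor <;> intro h <;> linarith
  have h11 : 0 ≤ (1 - p - q) / d + p + q ↔ -(1 / (d - 1)) ≤ p + q := by
    rw [add_assoc, div_add' _ _ _ hd0.ne', le_div_iff₀ hd0, ← neg_div, div_le_iff₀ hd1]
    constructor <;> intro h <;> linarith
  rw [h00, h10, h01, h11]
  tauto

/-- For `d ≥ 2`, the map `L^{(d)}_{p,q}` is positive (1-positive) iff
`p - (d-1)q ≤ 1`, `q - (d-1)p ≤ 1` and `-1/(d-1) ≤ p + q ≤ 1`. -/
theorem Lmap_positive_iff {d : ℕ} (hd : 2 ≤ d) (p q : ℝ) :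
    IsKPositive 1 (Lmap d p q) ↔
      (p - ((d : ℝ) - 1) * q ≤ 1 ∧ q - ((d : ℝ) - 1) * p ≤ 1 ∧
        -(1 / ((d : ℝ) - 1)) ≤ p + q ∧ p + q ≤ 1) := by
  have : Nontrivial (Fin d) := Fin.nontrivial_iff_two_le.2 hd
  have hd' : (1 : ℝ) < d := by exact_mod_cast hd
  simp only [isKPositive_one_iff, Lmap_apply, ← nonneg_iff_posSemidef]
  rw [forall_orthogonallyCovariantMap_nonneg_iff, corners_nonneg_iff hd']

end
end

section
/- Let d ≥ 2 and a, b ∈ ℝ. The operator ρ^{(d)}_{a,b} is separable (i.e. ρ^{(d)}_{a,b} ∈ Sch_1) if and only if −1/(d−1) ≤ (d+1)a + b ≤ 1 and −1/(d−1) ≤ a + (d+1)b ≤ 1. -/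
open Matrix
open scoped ComplexOrder

noncomputable section

/-! A separable operator is positive semidefinite, and so is its partial transpose. The partial
transpose of `ρ_{a,b}` is `ρ_{b,a}`, and testing both operators on `∑ |jj⟩` and on `|ij⟩ - |ji⟩`
gives the four inequalities.

Conversely, averaging `|x ⊗ y⟩⟨x ⊗ y|` over the signed permutation matrices `S ⊗ S` gives a
separable operator `α I + β W + γ F + δ D` whose coefficients depend only on `‖x‖² ‖y‖²`,
`|⟨x̄, y⟩|²`, `|⟨x, y⟩|²` and `∑ |x_i y_i|²`; unlike the orthogonal group, this group is finite.
For each vertex of the parallelogram cut out by the inequalities, two such averages can be combined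
so that the term `δ D`, which `ρ_{a,b}` does not have, cancels. The remaining `ρ_{a,b}` are convex
combinations of the vertices. -/

section SignedPermutations

variable {ι M : Type*} [Fintype ι] [DecidableEq ι]

/-- The positions `i, j, k, l` of a fourfold product can be matched into two pairs of equal
indices: exactly then the product of the corresponding signs is identically one. -/
def IsPaired (i j k l : ι) : Prop :=
  (i = k ∧ j = l) ∨ (i = j ∧ k = l) ∨ (i = l ∧ j = k)

lemma sum_units_mul_eq_zero {i j k l : ι} (hj : j ≠ i) (hk : k ≠ i) (hl : l ≠ i) :
    ∑ s : ι → ℤˣ, ((s i * (s j * s k * s l) : ℤˣ) : ℤ) = 0 := by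
  let t : ι → ℤˣ := Pi.mulSingle i (-1)
  have hflip : ∀ s : ι → ℤˣ, (((t * s) i * ((t * s) j * (t * s) k * (t * s) l) : ℤˣ) : ℤ) =
      -((s i * (s j * s k * s l) : ℤˣ) : ℤ) := fun s => by
    simp [t, hj, hk, hl]
  have hsum := Equiv.sum_comp (Equiv.mulLeft t)
    fun s : ι → ℤˣ => ((s i * (s j * s k * s l) : ℤˣ) : ℤ)
  simp only [Equiv.coe_mulLeft, hflip, Finset.sum_neg_distrib] at hsum
  lia

open Classical in
lemma sum_units_mul_eq_ite (i j k l : ι) :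
    ∑ s : ι → ℤˣ, ((s i * s j * s k * s l : ℤˣ) : ℤ) =
      if IsPaired i j k l then 2 ^ Fintype.card ι else 0 := by
  split_ifs with h
  · have hone : ∀ s : ι → ℤˣ, s i * s j * s k * s l = 1 := fun s => by
      rcases h with ⟨rfl, rfl⟩ | ⟨rfl, rfl⟩ | ⟨rfl, rfl⟩
      · rw [mul_right_comm (s i), Int.units_mul_self, one_mul, Int.units_mul_self]
      · rw [Int.units_mul_self, one_mul, Int.units_mul_self]
      · rw [mul_assoc (s i), Int.units_mul_self, mul_one, Int.units_mul_self]
    simp [hone]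
  · have hlonely : (j ≠ i ∧ k ≠ i ∧ l ≠ i) ∨ (i ≠ j ∧ k ≠ j ∧ l ≠ j) ∨
        (i ≠ k ∧ j ≠ k ∧ l ≠ k) ∨ (i ≠ l ∧ j ≠ l ∧ k ≠ l) := by
      grind [IsPaired]
    rcases hlonely with ⟨h₁, h₂, h₃⟩ | ⟨h₁, h₂, h₃⟩ | ⟨h₁, h₂, h₃⟩ | ⟨h₁, h₂, h₃⟩ <;>
      rw [← sum_units_mul_eq_zero h₁ h₂ h₃] <;>
      refine Finset.sum_congr rfl fun s _ => congrArg _ ?_ <;>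
      ac_rfl

variable [AddCommMonoid M]

lemma card_smul_sum_perm_apply (f : ι → M) (i : ι) :
    Fintype.card ι • ∑ σ : Equiv.Perm ι, f (σ i) = (Fintype.card ι).factorial • ∑ a, f a := by
  have hconst : ∀ j, ∑ σ : Equiv.Perm ι, f (σ j) = ∑ σ : Equiv.Perm ι, f (σ i) := fun j =>
    Fintype.sum_equiv (Equiv.mulRight (Equiv.swap i j)) _ _ fun σ => by simp
  calc Fintype.card ι • ∑ σ : Equiv.Perm ι, f (σ i)
    _ = ∑ j, ∑ σ : Equiv.Perm ι, f (σ j) := by simp [hconst]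
    _ = ∑ σ : Equiv.Perm ι, ∑ j, f (σ j) := Finset.sum_comm
    _ = (Fintype.card ι).factorial • ∑ a, f a := by
      simp [Equiv.sum_comp, Fintype.card_perm]

lemma card_offDiag_smul_sum_perm_apply (f : ι → ι → M) {i j : ι} (hij : i ≠ j) :
    (Finset.univ : Finset ι).offDiag.card • ∑ σ : Equiv.Perm ι, f (σ i) (σ j) =
      (Fintype.card ι).factorial • ∑ p ∈ Finset.univ.offDiag, f p.1 p.2 := by
  have hconst : ∀ p ∈ (Finset.univ : Finset ι).offDiag,
      ∑ σ : Equiv.Perm ι, f (σ p.1) (σ p.2) = ∑ σ : Equiv.Perm ι, f (σ i) (σ j) := fun p hp => by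
    obtain ⟨τ, hi, hj⟩ := MulAction.is_two_pretransitive_iff.1
      (Equiv.Perm.isMultiplyPretransitive ι 2) hij (Finset.mem_offDiag.1 hp).2.2
    exact Fintype.sum_equiv (Equiv.mulRight τ) _ _ fun σ => by simp [← hi, ← hj]
  have hperm : ∀ σ : Equiv.Perm ι, ∑ p ∈ Finset.univ.offDiag, f (σ p.1) (σ p.2) =
      ∑ p ∈ Finset.univ.offDiag, f p.1 p.2 := fun σ =>
    Finset.sum_equiv (σ.prodCongr σ) (by simp) (by simp)
  calc (Finset.univ : Finset ι).offDiag.card • ∑ σ : Equiv.Perm ι, f (σ i) (σ j)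
    _ = ∑ p ∈ Finset.univ.offDiag, ∑ σ : Equiv.Perm ι, f (σ p.1) (σ p.2) := by
      rw [Finset.sum_congr rfl hconst, Finset.sum_const]
    _ = ∑ σ : Equiv.Perm ι, ∑ p ∈ Finset.univ.offDiag, f (σ p.1) (σ p.2) := Finset.sum_comm
    _ = (Fintype.card ι).factorial • ∑ p ∈ Finset.univ.offDiag, f p.1 p.2 := by
      simp [hperm, Fintype.card_perm]

end SignedPermutations

lemma sum_offDiag_mul {ι R : Type*} [Fintype ι] [NonUnitalNonAssocRing R] (f g : ι → R) :
    ∑ p ∈ Finset.univ.offDiag, f p.1 * g p.2 = (∑ a, f a) * ∑ a, g a - ∑ a, f a * g a := by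
  classical
  rw [Finset.sum_mul_sum, ← Finset.sum_product', ← Finset.diag_union_offDiag,
    Finset.sum_union (Finset.disjoint_diag_offDiag _), Finset.sum_diag, add_sub_cancel_left]

lemma exists_eq_vecMulVec_of_rank_le_one {m n K : Type*} [Fintype n] [Field K]
    {A : Matrix m n K} (hA : A.rank ≤ 1) : ∃ x y, A = vecMulVec x y := by
  classical
  obtain ⟨v, hv⟩ := finrank_le_one_iff.1 hA
  choose y hy using fun j => hv ⟨A.mulVecLin (Pi.single j 1), ⟨_, rfl⟩⟩
  refine ⟨v.1, y, ?_⟩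
  ext i j
  simpa [vecMulVec_apply, mul_comm] using (congrFun (congrArg Subtype.val (hy j)) i).symm

/-- The projection `|x ⊗ y⟩⟨x ⊗ y|` (unnormalised) onto a product vector. -/
def productProjection {m n : Type*} (x : m → ℂ) (y : n → ℂ) : Matrix (m × n) (m × n) ℂ :=
  vecMulVec (fun p => x p.1 * y p.2) (star fun p => x p.1 * y p.2)

section SchmidtCone

variable {m n k : ℕ}

lemma sum_vecMulVec_mem_schmidtSet {ι : Type*} [Fintype ι] (ξ : ι → Fin m × Fin n → ℂ)
    (hξ : ∀ i, (of fun a b => ξ i (a, b)).rank ≤ k) :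
    ∑ i, vecMulVec (ξ i) (star (ξ i)) ∈ SchmidtSet m n k :=
  ⟨Fintype.card ι, fun i => ξ ((Fintype.equivFin ι).symm i), fun _ => hξ _,
    (Equiv.sum_comp (Fintype.equivFin ι).symm fun i => vecMulVec (ξ i) (star (ξ i))).symm⟩

/-- `SchmidtSet` as a convex cone, so that the closure properties of cones apply to it. -/
def schmidtCone (m n k : ℕ) : PointedCone ℝ (Matrix (Fin m × Fin n) (Fin m × Fin n) ℂ) where
  carrier := SchmidtSet m n k
  zero_mem' := ⟨0, nofun, nofun, by simp⟩
  add_mem' := by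
    rintro _ _ ⟨N, ξ, hξ, rfl⟩ ⟨N', η, hη, rfl⟩
    simpa using sum_vecMulVec_mem_schmidtSet (k := k) (Sum.elim ξ η)
      (by rintro (i | i) <;> simp [hξ, hη])
  smul_mem' := by
    rintro ⟨c, hc⟩ _ ⟨N, ξ, hξ, rfl⟩
    refine ⟨N, fun i => √c • ξ i, fun i => ?_, ?_⟩
    · have hmul : (of fun a b => (√c • ξ i) (a, b)) =
          (√c • (1 : Matrix (Fin m) (Fin m) ℂ)) * of fun a b => ξ i (a, b) := by
        ext; simp
      exact hmul ▸ (rank_mul_le_right _ _).trans (hξ i)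
    · simp [Finset.smul_sum, star_smul, smul_vecMulVec, vecMulVec_smul, smul_smul,
        Real.mul_self_sqrt hc]

lemma posSemidef_of_mem_schmidtCone {X : Matrix (Fin m × Fin n) (Fin m × Fin n) ℂ}
    (hX : X ∈ schmidtCone m n k) : X.PosSemidef := by
  obtain ⟨N, ξ, -, rfl⟩ := hX
  exact posSemidef_sum _ fun i _ => posSemidef_vecMulVec_self_star (ξ i)

lemma productProjection_mem_schmidtCone (x : Fin m → ℂ) (y : Fin n → ℂ) :
    productProjection x y ∈ schmidtCone m n 1 :=
  ⟨1, fun _ p => x p.1 * y p.2, fun _ => rank_vecMulVec_le x y, by simp [productProjection]⟩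

lemma exists_eq_sum_productProjection {X : Matrix (Fin m × Fin n) (Fin m × Fin n) ℂ}
    (hX : X ∈ schmidtCone m n 1) :
    ∃ (N : ℕ) (x : Fin N → Fin m → ℂ) (y : Fin N → Fin n → ℂ),
      X = ∑ i, productProjection (x i) (y i) := by
  obtain ⟨N, ξ, hξ, rfl⟩ := hX
  choose x y hxy using fun i => exists_eq_vecMulVec_of_rank_le_one (hξ i)
  have hprod : ∀ i, ξ i = fun p => x i p.1 * y i p.2 := fun i =>
    funext fun p => congrFun₂ (hxy i) p.1 p.2
  exact ⟨N, x, y, Finset.sum_congr rfl fun i _ => by rw [hprod, productProjection]⟩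

end SchmidtCone

section PartialTranspose

/-- The partial transpose on the second tensor factor. -/
def partialTranspose {m n R : Type*} [Semiring R] :
    Matrix (m × n) (m × n) R →ₗ[R] Matrix (m × n) (m × n) R where
  toFun X := of fun p q => X (p.1, q.2) (q.1, p.2)
  map_add' _ _ := rfl
  map_smul' _ _ := rfl

lemma partialTranspose_apply {m n R : Type*} [Semiring R] (X : Matrix (m × n) (m × n) R)
    (p q : m × n) : partialTranspose X p q = X (p.1, q.2) (q.1, p.2) := rfl

lemma partialTranspose_productProjection {m n : Type*} (x : m → ℂ) (y : n → ℂ) :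
    partialTranspose (productProjection x y) = productProjection x (star y) := by
  ext p q
  simp only [partialTranspose_apply, productProjection, vecMulVec_apply, Pi.star_apply, star_mul',
    star_star]
  ring

lemma partialTranspose_mem_schmidtCone {m n : ℕ} {X : Matrix (Fin m × Fin n) (Fin m × Fin n) ℂ}
    (hX : X ∈ schmidtCone m n 1) : partialTranspose X ∈ schmidtCone m n 1 := by
  obtain ⟨N, x, y, rfl⟩ := exists_eq_sum_productProjection hX
  simp only [map_sum, partialTranspose_productProjection]
  exact sum_mem fun i _ => productProjection_mem_schmidtCone _ _

end PartialTranspose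

/-- The operator `α I + β W + γ F + δ D` with `W = ∑ |ii⟩⟨jj|`, the flip `F` and
`D = ∑ |ii⟩⟨ii|`. These are the operators commuting with all `S ⊗ S`, `S` a signed permutation
matrix; those with `δ = 0` commute with all `O ⊗ O`, `O` real orthogonal. -/
def signedPermInvariant (d : ℕ) (α β γ δ : ℂ) : Matrix (Fin d × Fin d) (Fin d × Fin d) ℂ :=
  of fun p q => α * (if p.1 = q.1 ∧ p.2 = q.2 then 1 else 0)
    + β * (if p.1 = p.2 ∧ q.1 = q.2 then 1 else 0)
    + γ * (if p.1 = q.2 ∧ p.2 = q.1 then 1 else 0)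
    + δ * (if p.1 = p.2 ∧ q.1 = q.2 ∧ p.1 = q.1 then 1 else 0)

section SignedPermInvariant

variable {d : ℕ}

lemma signedPermInvariant_add (α β γ δ α' β' γ' δ' : ℂ) :
    signedPermInvariant d α β γ δ + signedPermInvariant d α' β' γ' δ' =
      signedPermInvariant d (α + α') (β + β') (γ + γ') (δ + δ') := by
  ext p q
  simp only [signedPermInvariant, Matrix.add_apply, of_apply]
  ring

lemma smul_signedPermInvariant (c : ℝ) (α β γ δ : ℂ) :
    c • signedPermInvariant d α β γ δ = signedPermInvariant d (c * α) (c * β) (c * γ) (c * δ) := by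
  ext p q
  simp only [signedPermInvariant, Matrix.smul_apply, of_apply, Complex.real_smul]
  ring

lemma partialTranspose_signedPermInvariant (α β γ δ : ℂ) :
    partialTranspose (signedPermInvariant d α β γ δ) = signedPermInvariant d α γ β δ := by
  ext ⟨i, j⟩ ⟨k, l⟩
  have hdiag : i = l ∧ j = k ∧ i = k ↔ i = j ∧ k = l ∧ i = k := by grind
  simp only [partialTranspose_apply, signedPermInvariant, of_apply, hdiag,
    eq_comm (a := l) (b := j), eq_comm (a := l) (b := k), eq_comm (a := k) (b := j)]
  ring

lemma rho_eq_signedPermInvariant (a b : ℝ) :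
    rho d a b = signedPermInvariant d ((1 - a - b) / d ^ 2) (a / d) (b / d) 0 := by
  have hsqrt : ((√d : ℝ) : ℂ)⁻¹ * ((√d : ℝ) : ℂ)⁻¹ = (d : ℂ)⁻¹ := by
    rw [← mul_inv, ← Complex.ofReal_mul, Real.mul_self_sqrt d.cast_nonneg, Complex.ofReal_natCast]
  ext ⟨i, j⟩ ⟨k, l⟩
  have homega : vecMulVec (omegaVec d) (star (omegaVec d)) (i, j) (k, l) =
      (d : ℂ)⁻¹ * if i = j ∧ k = l then 1 else 0 := by
    by_cases hij : i = j <;> by_cases hkl : k = l <;>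
      simp [vecMulVec_apply, omegaVec, hij, hkl, hsqrt]
  simp only [rho, signedPermInvariant, Matrix.add_apply, Matrix.smul_apply, homega,
    flipMatrix, of_apply, one_apply, smul_eq_mul, Prod.mk.injEq]
  push_cast
  ring

lemma partialTranspose_rho (a b : ℝ) : partialTranspose (rho d a b) = rho d b a := by
  rw [rho_eq_signedPermInvariant, partialTranspose_signedPermInvariant,
    rho_eq_signedPermInvariant, sub_right_comm]

lemma signedPermInvariant_apply_diag (α β γ δ : ℂ) (i j : Fin d) :
    signedPermInvariant d α β γ δ (i, i) (j, j) = β + if i = j then α + γ + δ else 0 := by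
  by_cases hij : i = j
  · simp only [signedPermInvariant, mul_ite, mul_one, mul_zero, hij, of_apply, and_self, ↓reduceIte]
    ring
  · simp [signedPermInvariant, hij]

lemma signedPermInvariant_apply_ijij {i j : Fin d} (hij : i ≠ j) (α β γ δ : ℂ) :
    signedPermInvariant d α β γ δ (i, j) (i, j) = α := by
  simp [signedPermInvariant, hij]

lemma signedPermInvariant_apply_ijji {i j : Fin d} (hij : i ≠ j) (α β γ δ : ℂ) :
    signedPermInvariant d α β γ δ (i, j) (j, i) = γ := by
  simp [signedPermInvariant, hij]

lemma signedPermInvariant_apply_of_not_isPaired {i j k l : Fin d} (h : ¬IsPaired i j k l)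
    (α β γ δ : ℂ) : signedPermInvariant d α β γ δ (i, j) (k, l) = 0 := by
  obtain ⟨hik, hij, hil⟩ : ¬(i = k ∧ j = l) ∧ ¬(i = j ∧ k = l) ∧ ¬(i = l ∧ j = k) := by
    simpa only [IsPaired, not_or] using h
  have hdiag : ¬(i = j ∧ k = l ∧ i = k) := fun hc => hij ⟨hc.1, hc.2.1⟩
  simp [signedPermInvariant, hik, hij, hil, hdiag]

lemma nonneg_of_posSemidef_signedPermInvariant (hd : 0 < d) {α β γ δ : ℂ}
    (h : (signedPermInvariant d α β γ δ).PosSemidef) : 0 ≤ α + d * β + γ + δ := by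
  let ψ : Fin d × Fin d → ℂ := fun p => if p.1 = p.2 then 1 else 0
  have hquad : star ψ ⬝ᵥ signedPermInvariant d α β γ δ *ᵥ ψ = d * (α + d * β + γ + δ) := by
    simp only [dotProduct, Pi.star_apply, RCLike.star_def, MonoidWithZeroHom.map_ite_one_zero,
      mulVec, mul_ite, mul_one, mul_zero, Fintype.sum_prod_type, Finset.sum_ite_eq,
      Finset.mem_univ, ↓reduceIte, ite_mul, one_mul, zero_mul, signedPermInvariant_apply_diag,
      Finset.sum_add_distrib, Finset.sum_const, Finset.card_univ, Fintype.card_fin, nsmul_eq_mul, ψ]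
    ring
  have hnonneg : 0 ≤ (d : ℂ) * (α + d * β + γ + δ) := hquad ▸ h.dotProduct_mulVec_nonneg ψ
  exact le_of_mul_le_mul_left (by rwa [mul_zero]) (Nat.cast_pos.2 hd)

lemma le_of_posSemidef_signedPermInvariant {α β γ δ : ℂ} {i j : Fin d} (hij : i ≠ j)
    (h : (signedPermInvariant d α β γ δ).PosSemidef) : γ ≤ α := by
  let ψ : Fin d × Fin d → ℂ := Pi.single (i, j) 1 - Pi.single (j, i) 1
  have hquad : star ψ ⬝ᵥ signedPermInvariant d α β γ δ *ᵥ ψ = 2 * (α - γ) := by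
    simp only [star_sub, Pi.star_single, star_one, signedPermInvariant, mul_ite, mul_one, mul_zero,
      mulVec_sub, mulVec_single, MulOpposite.op_one, one_smul, dotProduct_sub, sub_dotProduct,
      single_dotProduct, col_apply, of_apply, and_self, ↓reduceIte, hij, add_zero, hij.symm,
      and_true, one_mul, zero_add, ψ]
    ring
  have hnonneg : 0 ≤ 2 * (α - γ) := hquad ▸ h.dotProduct_mulVec_nonneg ψ
  exact sub_nonneg.1 (le_of_mul_le_mul_left (by rwa [mul_zero]) two_pos)

end SignedPermInvariant

section SignedPermTwirl

variable {d : ℕ}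

/-- The vector `x` with its entries permuted by `σ` and multiplied by the signs `s`. -/
def signedPermute (s : Fin d → ℤˣ) (σ : Equiv.Perm (Fin d)) (x : Fin d → ℂ) : Fin d → ℂ :=
  fun i => ((s i : ℤ) : ℂ) * x (σ i)

/-- The (unnormalised) average of `|x ⊗ y⟩⟨x ⊗ y|` over the group of signed permutations. -/
def signedPermTwirl (x y : Fin d → ℂ) : Matrix (Fin d × Fin d) (Fin d × Fin d) ℂ :=
  ∑ σ : Equiv.Perm (Fin d), ∑ s : Fin d → ℤˣ,
    productProjection (signedPermute s σ x) (signedPermute s σ y)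

lemma signedPermTwirl_mem_schmidtCone (x y : Fin d → ℂ) :
    signedPermTwirl x y ∈ schmidtCone d d 1 :=
  sum_mem fun _ _ => sum_mem fun _ _ => productProjection_mem_schmidtCone _ _

/-- The average of `x ⊗ y ⊗ x̄ ⊗ ȳ` over all permutations of the entries (unnormalised). -/
def permMoment (x y : Fin d → ℂ) (i j k l : Fin d) : ℂ :=
  ∑ σ : Equiv.Perm (Fin d), x (σ i) * y (σ j) * star (x (σ k) * y (σ l))

open Classical in
lemma signedPermTwirl_apply (x y : Fin d → ℂ) (i j k l : Fin d) :
    signedPermTwirl x y (i, j) (k, l) =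
      if IsPaired i j k l then 2 ^ d * permMoment x y i j k l else 0 := by
  have hterm : ∀ (σ : Equiv.Perm (Fin d)) (s : Fin d → ℤˣ),
      productProjection (signedPermute s σ x) (signedPermute s σ y) (i, j) (k, l) =
        ((s i * s j * s k * s l : ℤˣ) : ℤ) * (x (σ i) * y (σ j) * star (x (σ k) * y (σ l))) :=
    fun σ s => by
      simp only [productProjection, signedPermute, vecMulVec_apply, Pi.star_apply, star_mul',
        star_intCast, RCLike.star_def, Units.val_mul, Int.cast_mul]
      ring
  simp only [signedPermTwirl, Matrix.sum_apply, hterm, ← Finset.sum_mul, ← Int.cast_sum,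
    sum_units_mul_eq_ite, Fintype.card_fin]
  split_ifs <;> simp [permMoment, Finset.mul_sum]

lemma card_mul_permMoment_diag (x y : Fin d → ℂ) (i : Fin d) :
    d * permMoment x y i i i i = d.factorial * ((x * y) ⬝ᵥ star (x * y)) := by
  simpa [permMoment, dotProduct] using
    card_smul_sum_perm_apply (fun a => x a * y a * star (x a * y a)) i

lemma card_mul_sum_perm_mul (f g : Fin d → ℂ) {i j : Fin d} (hij : i ≠ j) :
    (d * (d - 1) : ℂ) * ∑ σ : Equiv.Perm (Fin d), f (σ i) * g (σ j) =
      d.factorial * ((∑ a, f a) * ∑ a, g a - ∑ a, f a * g a) := by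
  have h := card_offDiag_smul_sum_perm_apply (fun a b => f a * g b) hij
  rw [sum_offDiag_mul, Finset.offDiag_card, Finset.card_univ, Fintype.card_fin, nsmul_eq_mul,
    nsmul_eq_mul, Nat.cast_sub (Nat.le_mul_self d), Nat.cast_mul] at h
  linear_combination h

lemma card_mul_permMoment_eq {x y f g : Fin d → ℂ} {i j k l m n : Fin d} (hmn : m ≠ n)
    (hfg : ∀ σ : Equiv.Perm (Fin d),
      x (σ i) * y (σ j) * star (x (σ k) * y (σ l)) = f (σ m) * g (σ n))
    (hdiag : ∀ a, f a * g a = x a * y a * star (x a * y a)) :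
    (d * (d - 1) : ℂ) * permMoment x y i j k l =
      d.factorial * ((∑ a, f a) * ∑ a, g a - (x * y) ⬝ᵥ star (x * y)) := by
  simp only [permMoment, hfg, card_mul_sum_perm_mul f g hmn, hdiag]
  rfl

variable (x y : Fin d → ℂ) {i j : Fin d}

lemma card_mul_permMoment_ijij (hij : i ≠ j) :
    (d * (d - 1) : ℂ) * permMoment x y i j i j =
      d.factorial * ((x ⬝ᵥ star x) * (y ⬝ᵥ star y) - (x * y) ⬝ᵥ star (x * y)) :=
  card_mul_permMoment_eq (f := x * star x) (g := y * star y) hij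
    (fun σ => by simp only [Pi.mul_apply, Pi.star_apply, star_mul']; ring)
    (fun a => by simp only [Pi.mul_apply, Pi.star_apply, star_mul']; ring)

lemma card_mul_permMoment_iijj (hij : i ≠ j) :
    (d * (d - 1) : ℂ) * permMoment x y i i j j =
      d.factorial * ((x ⬝ᵥ y) * star (x ⬝ᵥ y) - (x * y) ⬝ᵥ star (x * y)) := by
  rw [← star_dotProduct_star]
  exact card_mul_permMoment_eq (f := x * y) (g := star y * star x) hij
    (fun σ => by simp only [Pi.mul_apply, Pi.star_apply, star_mul']; ring)
    (fun a => by simp only [Pi.mul_apply, Pi.star_apply, star_mul']; ring)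

lemma card_mul_permMoment_ijji (hij : i ≠ j) :
    (d * (d - 1) : ℂ) * permMoment x y i j j i =
      d.factorial * ((x ⬝ᵥ star y) * star (x ⬝ᵥ star y) - (x * y) ⬝ᵥ star (x * y)) := by
  rw [← dotProduct_star]
  exact card_mul_permMoment_eq (f := x * star y) (g := y * star x) hij
    (fun σ => by simp only [Pi.mul_apply, Pi.star_apply, star_mul']; ring)
    (fun a => by simp only [Pi.mul_apply, Pi.star_apply, star_mul']; ring)

variable {x y}

lemma smul_signedPermTwirl {P Q R T : ℂ}
    (hP : (x ⬝ᵥ star x) * (y ⬝ᵥ star y) = P) (hQ : (x ⬝ᵥ y) * star (x ⬝ᵥ y) = Q)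
    (hR : (x ⬝ᵥ star y) * star (x ⬝ᵥ star y) = R) (hT : (x * y) ⬝ᵥ star (x * y) = T) :
    (d * (d - 1) : ℝ) • signedPermTwirl x y = (2 ^ d * d.factorial : ℝ) •
      signedPermInvariant d (P - T) (Q - T) (R - T) ((d + 2) * T - P - Q - R) := by
  ext ⟨i, j⟩ ⟨k, l⟩
  rw [Matrix.smul_apply, Matrix.smul_apply, signedPermTwirl_apply, Complex.real_smul,
    Complex.real_smul]
  push_cast
  split_ifs with hpaired
  · by_cases hdiag : i = j ∧ j = k ∧ k = l
    · obtain ⟨rfl, rfl, rfl⟩ := hdiag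
      have hmoment := card_mul_permMoment_diag x y i
      rw [hT] at hmoment
      rw [signedPermInvariant_apply_diag, if_pos rfl]
      linear_combination 2 ^ d * (d - 1) * hmoment
    rcases hpaired with ⟨rfl, rfl⟩ | ⟨rfl, rfl⟩ | ⟨rfl, rfl⟩
    · have hij : i ≠ j := by grind
      have hmoment := card_mul_permMoment_ijij x y hij
      rw [hP, hT] at hmoment
      rw [signedPermInvariant_apply_ijij hij]
      linear_combination 2 ^ d * hmoment
    · have hik : i ≠ k := by grind
      have hmoment := card_mul_permMoment_iijj x y hik
      rw [hQ, hT] at hmoment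
      rw [signedPermInvariant_apply_diag, if_neg hik]
      linear_combination 2 ^ d * hmoment
    · have hij : i ≠ j := by grind
      have hmoment := card_mul_permMoment_ijji x y hij
      rw [hR, hT] at hmoment
      rw [signedPermInvariant_apply_ijji hij]
      linear_combination 2 ^ d * hmoment
  · rw [signedPermInvariant_apply_of_not_isPaired hpaired, mul_zero, mul_zero]

lemma signedPermInvariant_mem_schmidtCone {P Q R T : ℂ}
    (hP : (x ⬝ᵥ star x) * (y ⬝ᵥ star y) = P) (hQ : (x ⬝ᵥ y) * star (x ⬝ᵥ y) = Q)
    (hR : (x ⬝ᵥ star y) * star (x ⬝ᵥ star y) = R) (hT : (x * y) ⬝ᵥ star (x * y) = T) :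
    signedPermInvariant d (P - T) (Q - T) (R - T) ((d + 2) * T - P - Q - R) ∈
      schmidtCone d d 1 := by
  have hscale : (0 : ℝ) < 2 ^ d * d.factorial := by positivity
  have hcard : (0 : ℝ) ≤ d * (d - 1) := by
    rw [mul_sub_one, sub_nonneg]
    exact_mod_cast Nat.le_mul_self d
  rw [← inv_smul_smul₀ hscale.ne' (signedPermInvariant d _ _ _ _),
    ← smul_signedPermTwirl hP hQ hR hT]
  exact (schmidtCone d d 1).smul_mem (inv_nonneg.2 hscale.le)
    ((schmidtCone d d 1).smul_mem hcard (signedPermTwirl_mem_schmidtCone x y))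

end SignedPermTwirl

section TwoEntryVec

variable {ι R : Type*} [DecidableEq ι] {i j : ι}

/-- The vector with the two entries `a` at `i` and `b` at `j`, all others being zero. -/
def twoEntryVec [AddZeroClass R] (i j : ι) (a b : R) : ι → R := Pi.single i a + Pi.single j b

lemma star_twoEntryVec [AddMonoid R] [StarAddMonoid R] (i j : ι) (a b : R) :
    star (twoEntryVec i j a b) = twoEntryVec i j (star a) (star b) := by
  simp only [twoEntryVec, star_add, Pi.single_star]

variable [NonUnitalNonAssocSemiring R]

lemma twoEntryVec_dotProduct [Fintype ι] (hij : i ≠ j) (a b a' b' : R) :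
    twoEntryVec i j a b ⬝ᵥ twoEntryVec i j a' b' = a * a' + b * b' := by
  simp [twoEntryVec, hij, hij.symm]

lemma twoEntryVec_mul (hij : i ≠ j) (a b a' b' : R) :
    twoEntryVec i j a b * twoEntryVec i j a' b' = twoEntryVec i j (a * a') (b * b') := by
  ext k
  simp only [twoEntryVec, Pi.mul_apply, Pi.add_apply, Pi.single_apply]
  split_ifs <;> simp_all

end TwoEntryVec

section Separability

variable {d : ℕ}

lemma exists_unimodular_dotProduct_self_eq_zero (hd : 2 ≤ d) :
    ∃ u : Fin d → ℂ, (∀ i, u i * star (u i) = 1) ∧ u ⬝ᵥ u = 0 := by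
  have hζ := Complex.isPrimitiveRoot_exp (2 * d) (by lia)
  set ζ := Complex.exp (2 * Real.pi * Complex.I / (2 * d : ℕ))
  refine ⟨fun i => ζ ^ (i : ℕ), ?_, ?_⟩
  · intro i
    have hnorm : ‖ζ‖ = 1 := hζ.norm'_eq_one (by lia)
    simp [← map_pow, Complex.mul_conj, Complex.normSq_eq_norm_sq, hnorm]
  · have hsq : IsPrimitiveRoot (ζ ^ 2) d := hζ.pow (by lia) rfl
    calc (fun i : Fin d => ζ ^ (i : ℕ)) ⬝ᵥ (fun i => ζ ^ (i : ℕ))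
      _ = ∑ i : Fin d, (ζ ^ 2) ^ (i : ℕ) :=
        Finset.sum_congr rfl fun i _ => by rw [← mul_pow, sq]
      _ = ∑ i ∈ Finset.range d, (ζ ^ 2) ^ i := Fin.sum_univ_eq_sum_range _ d
      _ = 0 := hsq.geom_sum_eq_zero hd

lemma signedPermInvariant_smul_add_smul_mem_schmidtCone {α β γ δ α' β' γ' δ' : ℂ}
    {c c' : ℝ} (hc₁ : 0 ≤ c) (hc₂ : 0 ≤ c')
    (h₁ : signedPermInvariant d α β γ δ ∈ schmidtCone d d 1)
    (h₂ : signedPermInvariant d α' β' γ' δ' ∈ schmidtCone d d 1) :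
    signedPermInvariant d (c * α + c' * α') (c * β + c' * β') (c * γ + c' * γ')
      (c * δ + c' * δ') ∈ schmidtCone d d 1 := by
  rw [← signedPermInvariant_add, ← smul_signedPermInvariant, ← smul_signedPermInvariant]
  exact add_mem ((schmidtCone d d 1).smul_mem hc₁ h₁) ((schmidtCone d d 1).smul_mem hc₂ h₂)

/- Up to scaling, the four vertices of the parallelogram in the theorem, named by whether
`a + (d + 1) b` and `(d + 1) a + b` (in this order) are maximal or minimal there. -/

lemma signedPermInvariant_max_max_mem_schmidtCone (hd : 0 < d) :
    signedPermInvariant d (d - 1) (d - 1) (d - 1) 0 ∈ schmidtCone d d 1 := by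
  have : (d : ℂ) ≠ 0 := Nat.cast_ne_zero.2 hd.ne'
  let e : Fin d → ℂ := Pi.single ⟨0, hd⟩ 1
  have hbasis : signedPermInvariant d 0 0 0 (d - 1) ∈ schmidtCone d d 1 := by
    convert signedPermInvariant_mem_schmidtCone (x := e) (y := e) (P := 1) (Q := 1) (R := 1)
      (T := 1) (by simp [e]) (by simp [e]) (by simp [e]) (by simp [e, ← Pi.single_mul])
      using 2 <;> ring
  have hones : signedPermInvariant d (d ^ 2 - d) (d ^ 2 - d) (d ^ 2 - d) (-2 * (d ^ 2 - d)) ∈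
      schmidtCone d d 1 := by
    convert signedPermInvariant_mem_schmidtCone (d := d) (x := 1) (y := 1) (P := d ^ 2) (Q := d ^ 2)
      (R := d ^ 2) (T := d) (by simp [sq]) (by simp [sq]) (by simp [sq]) (by simp) using 2
    ring
  convert signedPermInvariant_smul_add_smul_mem_schmidtCone (c := 1 / d) (c' := 2)
    (by positivity) zero_le_two hones hbasis using 2 <;> (push_cast; field_simp; ring)

lemma signedPermInvariant_max_min_mem_schmidtCone (hd : 2 ≤ d) :
    signedPermInvariant d d (-2) d 0 ∈ schmidtCone d d 1 := by
  have : (d : ℂ) ≠ 0 := Nat.cast_ne_zero.2 (by lia)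
  obtain ⟨i, j, hij⟩ := Fin.nontrivial_iff_two_le.2 hd
  obtain ⟨u, hu, huu⟩ := exists_unimodular_dotProduct_self_eq_zero hd
  have hpair : signedPermInvariant d 2 (-2) 2 (2 * d - 4) ∈ schmidtCone d d 1 := by
    let v := twoEntryVec i j 1 Complex.I
    have hvv : v ⬝ᵥ v = 0 := by simp [v, twoEntryVec_dotProduct hij]
    have hnorm : v ⬝ᵥ star v = 2 := by
      norm_num [v, star_twoEntryVec, twoEntryVec_dotProduct hij]
    have hfourth : (v * v) ⬝ᵥ star (v * v) = 2 := by
      norm_num [v, star_twoEntryVec, twoEntryVec_dotProduct hij, twoEntryVec_mul hij]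
    convert signedPermInvariant_mem_schmidtCone (P := 4) (Q := 0) (R := 4) (by norm_num [hnorm])
      (by simp [hvv]) (by norm_num [hnorm]) hfourth using 2 <;> ring
  have hflat : signedPermInvariant d (d ^ 2 - d) (-d) (d ^ 2 - d) (d * (2 - d)) ∈
      schmidtCone d d 1 := by
    have husq : ∀ i, u i * u i * star (u i * u i) = 1 := fun i => by
      rw [star_mul', mul_mul_mul_comm, hu, one_mul]
    have hnorm : u ⬝ᵥ star u = d := by
      simp only [dotProduct, Pi.star_apply, hu, Finset.sum_const, Finset.card_univ,
        Fintype.card_fin, nsmul_one]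
    have hfourth : (u * u) ⬝ᵥ star (u * u) = d := by
      simp only [dotProduct, Pi.star_apply, Pi.mul_apply, husq, Finset.sum_const,
        Finset.card_univ, Fintype.card_fin, nsmul_one]
    convert signedPermInvariant_mem_schmidtCone (P := d ^ 2) (Q := 0) (R := d ^ 2)
      (by simp [hnorm, sq]) (by simp [huu]) (by simp [hnorm, sq]) hfourth using 2 <;> ring
  convert signedPermInvariant_smul_add_smul_mem_schmidtCone (c := 1 / 2) (c' := 1 / d)
    (by positivity) (by positivity) hpair hflat using 2 <;> (push_cast; field_simp; ring)

lemma signedPermInvariant_min_max_mem_schmidtCone (hd : 2 ≤ d) :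
    signedPermInvariant d d d (-2) 0 ∈ schmidtCone d d 1 := by
  rw [← partialTranspose_signedPermInvariant]
  exact partialTranspose_mem_schmidtCone (signedPermInvariant_max_min_mem_schmidtCone hd)

lemma signedPermInvariant_min_min_mem_schmidtCone (hd : 2 ≤ d) :
    signedPermInvariant d (d + 1) (-1) (-1) 0 ∈ schmidtCone d d 1 := by
  obtain ⟨i, j, hij⟩ := Fin.nontrivial_iff_two_le.2 hd
  have hbasis : signedPermInvariant d 1 0 0 (-1) ∈ schmidtCone d d 1 := by
    convert signedPermInvariant_mem_schmidtCone (x := twoEntryVec i j 1 0)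
      (y := twoEntryVec i j 0 1) rfl rfl rfl rfl using 2 <;>
      simp [star_twoEntryVec, twoEntryVec_dotProduct hij, twoEntryVec_mul hij]
  have hpair : signedPermInvariant d 2 (-2) (-2) (2 * d) ∈ schmidtCone d d 1 := by
    let x : Fin d → ℂ := twoEntryVec i j 1 1
    let y : Fin d → ℂ := twoEntryVec i j 1 (-1)
    have hxx : x ⬝ᵥ star x = 2 := by
      norm_num [x, star_twoEntryVec, twoEntryVec_dotProduct hij]
    have hyy : y ⬝ᵥ star y = 2 := by
      norm_num [y, star_twoEntryVec, twoEntryVec_dotProduct hij]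
    have hxy : x ⬝ᵥ y = 0 ∧ x ⬝ᵥ star y = 0 := by
      simp [x, y, star_twoEntryVec, twoEntryVec_dotProduct hij]
    have hfourth : (x * y) ⬝ᵥ star (x * y) = 2 := by
      norm_num [x, y, star_twoEntryVec, twoEntryVec_dotProduct hij, twoEntryVec_mul hij]
    convert signedPermInvariant_mem_schmidtCone (P := 4) (Q := 0) (R := 0)
      (by norm_num [hxx, hyy]) (by simp [hxy]) (by simp [hxy]) hfourth using 2 <;> ring
  convert signedPermInvariant_smul_add_smul_mem_schmidtCone (c := d) (c' := 1 / 2)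
    (by positivity) (by positivity) hbasis hpair using 2 <;> (push_cast; ring)

variable {a b : ℝ}

lemma bounds_of_posSemidef_rho (hd : 2 ≤ d) (h : (rho d a b).PosSemidef) :
    0 ≤ 1 + (d - 1) * ((d + 1) * a + b) ∧ a + (d + 1) * b ≤ 1 := by
  have hd0 : 0 < d := by lia
  obtain ⟨i, j, hij⟩ := Fin.nontrivial_iff_two_le.2 hd
  rw [rho_eq_signedPermInvariant] at h
  have hlower : 0 ≤ (1 - a - b) / d ^ 2 + d * (a / d) + b / d + 0 := by
    exact_mod_cast nonneg_of_posSemidef_signedPermInvariant hd0 h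
  have hupper : b / d ≤ (1 - a - b) / d ^ 2 := by
    exact_mod_cast le_of_posSemidef_signedPermInvariant hij h
  constructor
  · calc 0 ≤ d ^ 2 * ((1 - a - b) / d ^ 2 + d * (a / d) + b / d + 0) :=
        mul_nonneg (sq_nonneg _) hlower
      _ = 1 + (d - 1) * ((d + 1) * a + b) := by field_simp; ring
  · have hmul : d * b ≤ 1 - a - b := calc
      d * b = d ^ 2 * (b / d) := by field_simp
      _ ≤ d ^ 2 * ((1 - a - b) / d ^ 2) := mul_le_mul_of_nonneg_left hupper (sq_nonneg _)
      _ = 1 - a - b := by field_simp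
    linarith

/-- Bilinear interpolation in `s = a + (d + 1) b` and `t = (d + 1) a + b` between the vertices. -/
lemma smul_rho_eq (hd : 0 < d) {s t : ℝ} (hs : s = a + (d + 1) * b) (ht : t = (d + 1) * a + b) :
    (d ^ 3 * (d + 2) * (d - 1) : ℝ) • rho d a b =
      ((1 + (d - 1) * s) * (1 + (d - 1) * t)) • signedPermInvariant d (d - 1) (d - 1) (d - 1) 0 +
      ((1 + (d - 1) * s) * ((d - 1) * (1 - t))) • signedPermInvariant d d (-2) d 0 +
      ((d - 1) * (1 - s) * (1 + (d - 1) * t)) • signedPermInvariant d d d (-2) 0 +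
      ((d - 1) * (1 - s) * ((d - 1) * (1 - t))) • signedPermInvariant d (d + 1) (-1) (-1) 0 := by
  have : (d : ℂ) ≠ 0 := Nat.cast_ne_zero.2 hd.ne'
  subst s t
  simp only [rho_eq_signedPermInvariant, smul_signedPermInvariant, signedPermInvariant_add]
  congr 1 <;> (push_cast; field_simp; ring)

lemma rho_mem_schmidtCone (hd : 2 ≤ d)
    (hs₀ : 0 ≤ 1 + (d - 1) * (a + (d + 1) * b)) (hs₁ : a + (d + 1) * b ≤ 1)
    (ht₀ : 0 ≤ 1 + (d - 1) * ((d + 1) * a + b)) (ht₁ : (d + 1) * a + b ≤ 1) :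
    rho d a b ∈ schmidtCone d d 1 := by
  have hd0 : 0 < d := by lia
  have hd1 : (0 : ℝ) < d - 1 := sub_pos.2 (Nat.one_lt_cast.2 hd)
  have hscale : (0 : ℝ) < d ^ 3 * (d + 2) * (d - 1) := by positivity
  have hs₁' := mul_nonneg hd1.le (sub_nonneg.2 hs₁)
  have ht₁' := mul_nonneg hd1.le (sub_nonneg.2 ht₁)
  rw [← inv_smul_smul₀ hscale.ne' (rho d a b), smul_rho_eq hd0 rfl rfl]
  refine (schmidtCone d d 1).smul_mem (inv_nonneg.2 hscale.le) ?_
  have h₁₁ := signedPermInvariant_max_max_mem_schmidtCone hd0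
  have h₁₀ := signedPermInvariant_max_min_mem_schmidtCone hd
  have h₀₁ := signedPermInvariant_min_max_mem_schmidtCone hd
  have h₀₀ := signedPermInvariant_min_min_mem_schmidtCone hd
  exact add_mem (add_mem (add_mem
    ((schmidtCone d d 1).smul_mem (mul_nonneg hs₀ ht₀) h₁₁)
    ((schmidtCone d d 1).smul_mem (mul_nonneg hs₀ ht₁') h₁₀))
    ((schmidtCone d d 1).smul_mem (mul_nonneg hs₁' ht₀) h₀₁))
    ((schmidtCone d d 1).smul_mem (mul_nonneg hs₁' ht₁') h₀₀)

end Separability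

/-- For `d ≥ 2`, the operator `ρ^{(d)}_{a,b}` is separable
(`ρ^{(d)}_{a,b} ∈ Sch_1`) iff `-1/(d-1) ≤ (d+1)a + b ≤ 1` and `-1/(d-1) ≤ a + (d+1)b ≤ 1`. -/
theorem rho_separable_iff {d : ℕ} (hd : 2 ≤ d) (a b : ℝ) :
    rho d a b ∈ SchmidtSet d d 1 ↔
      (-(1 / ((d : ℝ) - 1)) ≤ ((d : ℝ) + 1) * a + b ∧ ((d : ℝ) + 1) * a + b ≤ 1 ∧
       -(1 / ((d : ℝ) - 1)) ≤ a + ((d : ℝ) + 1) * b ∧ a + ((d : ℝ) + 1) * b ≤ 1) := by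
  have hd1 : (0 : ℝ) < d - 1 := sub_pos.2 (Nat.one_lt_cast.2 hd)
  have hlower (t : ℝ) : -(1 / ((d : ℝ) - 1)) ≤ t ↔ 0 ≤ 1 + (d - 1) * t := by
    rw [← neg_div, div_le_iff₀ hd1]
    constructor <;> intro h <;> linarith
  rw [hlower, hlower]
  constructor
  · intro hsep
    have hpt := partialTranspose_mem_schmidtCone hsep
    rw [partialTranspose_rho] at hpt
    obtain ⟨ht₀, hs₁⟩ := bounds_of_posSemidef_rho hd (posSemidef_of_mem_schmidtCone hsep)
    obtain ⟨hs₀, ht₁⟩ := bounds_of_posSemidef_rho hd (posSemidef_of_mem_schmidtCone hpt)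
    exact ⟨ht₀, by linarith, by linarith, hs₁⟩
  · rintro ⟨ht₀, ht₁, hs₀, hs₁⟩
    exact rho_mem_schmidtCone hd hs₀ hs₁ ht₀ ht₁

end
end
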